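/- Let (A,[·,·],α,β) be a regular BiHom-Lie algebra over a field K of characteristic zero, (V,[·,·]_V,ρ,φ,ψ) a regular A-module K-algebra, and T : V → A an O-operator of weight λ ∈ K associated to (V,[·,·]_V,ρ,φ,ψ). Define {u,v} = λ[u,v]_V and u ▷ v = ρ(T(u))v for u,v ∈ V. Then (V,{·,·},▷,φ,ψ) is a BiHom-post-Lie algebra, and T is a morphism of BiHom-Lie algebras from the sub-adjacent BiHom-Lie algebra of (V,{·,·},▷,φ,ψ) to (A,[·,·],α,β), i.e., T({u,v} + u ▷ v − φ⁻¹ψ(v) ▷ φψ⁻¹(u)) = [T(u),T(v)] for all u,v ∈ V. -/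

import Mathlib

section Defs

variable (K : Type*) [Field K]
variable {A V : Type*} [AddCommGroup A] [Module K A] [AddCommGroup V] [Module K V]

/-- `f : A → A → V` is bilinear over `K`. -/
def IsBilin (f : A → A → V) : Prop :=
  (∀ y, IsLinearMap K fun x => f x y) ∧ (∀ x, IsLinearMap K fun y => f x y)

/-- `b` is a Lie bracket on `A`. -/
def IsLieBracket (b : A → A → A) : Prop :=
  IsBilin K b ∧ (∀ x y, b x y = - b y x) ∧
    (∀ x y z, b x (b y z) + b y (b z x) + b z (b x y) = 0)

/-- `(A, b, t)` is a (left) post-Lie algebra. -/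
def IsPostLie (b t : A → A → A) : Prop :=
  IsLieBracket K b ∧ IsBilin K t ∧
    (∀ x y z, t x (b y z) = b (t x y) z + b y (t x z)) ∧
    (∀ x y z, t (b x y) z =
      (t x (t y z) - t (t x y) z) - (t y (t x z) - t (t y x) z))

/-- `ρ` is a representation of the Lie algebra `(A, b)` on `V`. -/
def IsLieRep (b : A → A → A) (ρ : A → V → V) : Prop :=
  (∀ x, IsLinearMap K (ρ x)) ∧ (∀ v, IsLinearMap K fun x => ρ x v) ∧
    (∀ x y v, ρ (b x y) v = ρ x (ρ y v) - ρ y (ρ x v))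

/-- `(A, b, α, β)` is a BiHom-Lie algebra. -/
def IsBiHomLie (b : A → A → A) (α β : A → A) : Prop :=
  IsBilin K b ∧ IsLinearMap K α ∧ IsLinearMap K β ∧
    (∀ x, α (β x) = β (α x)) ∧
    (∀ x y, α (b x y) = b (α x) (α y)) ∧
    (∀ x y, β (b x y) = b (β x) (β y)) ∧
    (∀ x y, b (β x) (α y) = - b (β y) (α x)) ∧
    (∀ x y z, b (β (β x)) (b (β y) (α z)) + b (β (β y)) (b (β z) (α x)) +
        b (β (β z)) (b (β x) (α y)) = 0)

/-- `(V, ρ, φ, ψ)` is a representation of the BiHom-Lie algebra `(A, b, α, β)`. -/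
def IsBiHomRep (b : A → A → A) (α β : A → A) (ρ : A → V → V) (φ ψ : V → V) : Prop :=
  IsLinearMap K φ ∧ IsLinearMap K ψ ∧ (∀ v, φ (ψ v) = ψ (φ v)) ∧
    (∀ x, IsLinearMap K (ρ x)) ∧ (∀ v, IsLinearMap K fun x => ρ x v) ∧
    (∀ x v, ρ (α x) (φ v) = φ (ρ x v)) ∧
    (∀ x v, ρ (β x) (ψ v) = ψ (ρ x v)) ∧
    (∀ x y v, ρ (b (β x) y) (ψ v) = ρ (α (β x)) (ρ y v) - ρ (β y) (ρ (α x) v))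

/-- `(A, b, t, α, β)` is a (left) BiHom-post-Lie algebra. -/
def IsBiHomPostLie (b t : A → A → A) (α β : A → A) : Prop :=
  IsBiHomLie K b α β ∧ IsBilin K t ∧
    (∀ x y, α (t x y) = t (α x) (α y)) ∧
    (∀ x y, β (t x y) = t (β x) (β y)) ∧
    (∀ x y z, t (α (β x)) (b y z) = b (t (β x) y) (β z) + b (β y) (t (α x) z)) ∧
    (∀ x y z, t (b (β x) (α y)) (β z) =
      (t (α (β x)) (t (α y) z) - t (t (β x) (α y)) (β z)) -
      (t (α (β y)) (t (α x) z) - t (t (β y) (α x)) (β z)))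

/-- `(V, bv, ρ, φ, ψ)` is an `A`-module `K`-algebra over the BiHom-Lie algebra
`(A, b, α, β)`. -/
def IsModuleKAlgebra (b : A → A → A) (α β : A → A) (bv : V → V → V)
    (ρ : A → V → V) (φ ψ : V → V) : Prop :=
  IsBiHomLie K bv φ ψ ∧ IsBiHomRep K b α β ρ φ ψ ∧
    (∀ x u v, ρ (α (β x)) (bv u v) = bv (ρ (β x) u) (ψ v) + bv (ψ u) (ρ (α x) v))

end Defs

/-! On arguments of the form `(ψ u, φ v)` the inverses cancel from the `O`-operator identity:
`[T (ψ u), T (φ v)] = T (ψ u ▷ φ v - ψ v ▷ φ u + {ψ u, φ v})`. Applying `ρ` to both sides and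
expanding the left one by the representation identity gives the last post-Lie axiom.
The others are the module-algebra axioms pulled back along `T`, and the weight is
harmless because they are homogeneous in the bracket of `V`. -/

section Bilinear

variable {K A V W : Type*} [Field K] [AddCommGroup A] [Module K A]
  [AddCommGroup V] [Module K V] [AddCommGroup W] [Module K W]

theorem IsBilin.const_smul {f : A → A → V} (hf : IsBilin K f) (c : K) :
    IsBilin K fun x y => c • f x y :=
  ⟨fun y => (c • (hf.1 y).mk').isLinear, fun x => (c • (hf.2 x).mk').isLinear⟩

theorem isBilin_comp_left {ρ : A → V → W} {T : V → A} (hρ : ∀ x, IsLinearMap K (ρ x))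
    (hρ' : ∀ v, IsLinearMap K fun x => ρ x v) (hT : IsLinearMap K T) :
    IsBilin K fun u v => ρ (T u) v :=
  ⟨fun v => ((hρ' v).mk' _ ∘ₗ hT.mk').isLinear, fun u => hρ (T u)⟩

end Bilinear

section ModuleAlgebra

variable {K A V : Type*} [Field K] [AddCommGroup A] [Module K A] [AddCommGroup V] [Module K V]
  {b : A → A → A} {α β : A → A} {bv : V → V → V} {ρ : A → V → V} {φ ψ : V → V} {T : V → A}

theorem IsBiHomLie.const_smul (h : IsBiHomLie K b α β) (c : K) :
    IsBiHomLie K (fun x y => c • b x y) α β := by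
  obtain ⟨hb, hα, hβ, hαβ, hα_map, hβ_map, hskew, hjacobi⟩ := h
  refine ⟨hb.const_smul c, hα, hβ, hαβ, fun x y => ?_, fun x y => ?_, fun x y => ?_,
    fun x y z => ?_⟩
  · rw [hα.map_smul, hα_map]
  · rw [hβ.map_smul, hβ_map]
  · simp only [hskew x y, smul_neg]
  · simp only [(hb.2 _).map_smul, ← smul_add, hjacobi, smul_zero]

theorem IsModuleKAlgebra.const_smul (h : IsModuleKAlgebra K b α β bv ρ φ ψ) (c : K) :
    IsModuleKAlgebra K b α β (fun u v => c • bv u v) ρ φ ψ := by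
  obtain ⟨hbv, hρ, hder⟩ := h
  refine ⟨hbv.const_smul c, hρ, fun x u v => ?_⟩
  have hρ_lin : ∀ x, IsLinearMap K (ρ x) := hρ.2.2.2.1
  rw [(hρ_lin _).map_smul, hder, smul_add]

theorem IsBiHomRep.map_bracket_eq_associator_sub (hρ : IsBiHomRep K b α β ρ φ ψ)
    (hT : IsLinearMap K T) (hTφ : ∀ v, T (φ v) = α (T v)) (hTψ : ∀ v, T (ψ v) = β (T v))
    (hbracket : ∀ u v, b (T (ψ u)) (T (φ v)) =
      T (ρ (T (ψ u)) (φ v) - ρ (T (ψ v)) (φ u) + bv (ψ u) (φ v))) (u v w : V) :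
    ρ (T (bv (ψ u) (φ v))) (ψ w) =
      (ρ (T (φ (ψ u))) (ρ (T (φ v)) w) - ρ (T (ρ (T (ψ u)) (φ v))) (ψ w)) -
        (ρ (T (φ (ψ v))) (ρ (T (φ u)) w) - ρ (T (ρ (T (ψ v)) (φ u))) (ψ w)) := by
  obtain ⟨-, -, hφψ, -, hρ_lin, -, -, hρ_bracket⟩ := hρ
  have hcommutator : ρ (b (T (ψ u)) (T (φ v))) (ψ w) =
      ρ (T (φ (ψ u))) (ρ (T (φ v)) w) - ρ (T (φ (ψ v))) (ρ (T (φ u)) w) := by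
    rw [hTψ, hρ_bracket, hφψ v]
    simp only [hTφ, hTψ]
  have hexpand : ρ (b (T (ψ u)) (T (φ v))) (ψ w) =
      ρ (T (ρ (T (ψ u)) (φ v))) (ψ w) - ρ (T (ρ (T (ψ v)) (φ u))) (ψ w) +
        ρ (T (bv (ψ u) (φ v))) (ψ w) := by
    rw [hbracket, hT.map_add, hT.map_sub, (hρ_lin _).map_add, (hρ_lin _).map_sub]
  rw [← sub_eq_iff_eq_add'.mpr hexpand, hcommutator]
  abel

theorem IsModuleKAlgebra.isBiHomPostLie (h : IsModuleKAlgebra K b α β bv ρ φ ψ)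
    (hT : IsLinearMap K T) (hTφ : ∀ v, T (φ v) = α (T v)) (hTψ : ∀ v, T (ψ v) = β (T v))
    (hbracket : ∀ u v, b (T (ψ u)) (T (φ v)) =
      T (ρ (T (ψ u)) (φ v) - ρ (T (ψ v)) (φ u) + bv (ψ u) (φ v))) :
    IsBiHomPostLie K bv (fun u v => ρ (T u) v) φ ψ := by
  obtain ⟨hbv, hρ, hder⟩ := h
  have hpost := hρ.map_bracket_eq_associator_sub hT hTφ hTψ hbracket
  obtain ⟨-, -, -, hρ_lin, hρ_lin', hφ_map, hψ_map, -⟩ := hρ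
  refine ⟨hbv, isBilin_comp_left hρ_lin hρ_lin' hT, fun u v => ?_, fun u v => ?_,
    fun u v w => ?_, hpost⟩
  · simp only [hTφ, hφ_map]
  · simp only [hTψ, hψ_map]
  · simp only [hTφ, hTψ, hder]

end ModuleAlgebra

section OOperator

/-- The sub-adjacent bracket `{u, v} + u ▷ v - φ⁻¹ψ(v) ▷ φψ⁻¹(u)` of a BiHom-post-Lie algebra with
bracket `b` and product `t`; the maps `φ'` and `ψ'` play the roles of `φ⁻¹` and `ψ⁻¹`. -/
def subAdjacentBracket {V : Type*} [AddCommGroup V] (b t : V → V → V) (φ ψ φ' ψ' : V → V)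
    (u v : V) : V :=
  b u v + t u v - t (φ' (ψ v)) (φ (ψ' u))

/-- `T` is an `O`-operator of weight `lam` associated to `(V, bv, ρ, φ, ψ)`. The module-algebra
axioms are assumed separately; the maps `φ'` and `ψ'` play the roles of `φ⁻¹` and `ψ⁻¹`. -/
structure IsOOperator (K : Type*) {A V : Type*} [Field K] [AddCommGroup A] [Module K A]
    [AddCommGroup V] [Module K V] (b : A → A → A) (α β : A → A) (bv : V → V → V)
    (ρ : A → V → V) (φ ψ φ' ψ' : V → V) (T : V → A) (lam : K) : Prop where
  isLinearMap : IsLinearMap K T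
  map_φ : ∀ v, T (φ v) = α (T v)
  map_ψ : ∀ v, T (ψ v) = β (T v)
  bracket_map : ∀ u v, b (T u) (T v) =
    T (ρ (T u) v - ρ (T (φ' (ψ v))) (φ (ψ' u)) + lam • bv u v)

variable {K A V : Type*} [Field K] [AddCommGroup A] [Module K A] [AddCommGroup V] [Module K V]
  {b : A → A → A} {α β : A → A} {bv : V → V → V} {ρ : A → V → V} {φ ψ φ' ψ' : V → V}
  {T : V → A} {lam : K}

theorem IsOOperator.map_subAdjacentBracket
    (h : IsOOperator K b α β bv ρ φ ψ φ' ψ' T lam) (u v : V) :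
    T (subAdjacentBracket (fun u v => lam • bv u v) (fun u v => ρ (T u) v) φ ψ φ' ψ' u v) =
      b (T u) (T v) := by
  rw [h.bracket_map, subAdjacentBracket, add_sub_assoc, add_comm]

theorem IsOOperator.bracket_map_ψ_φ (h : IsOOperator K b α β bv ρ φ ψ φ' ψ' T lam)
    (hφψ : Function.Commute φ ψ) (hφ : Function.LeftInverse φ' φ)
    (hψ : Function.LeftInverse ψ' ψ) (u v : V) :
    b (T (ψ u)) (T (φ v)) =
      T (ρ (T (ψ u)) (φ v) - ρ (T (ψ v)) (φ u) + lam • bv (ψ u) (φ v)) := by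
  rw [h.bracket_map, ← hφψ v, hφ, hψ]

theorem biHomPostLie_of_OOperator_general (hmod : IsModuleKAlgebra K b α β bv ρ φ ψ)
    (hφ : Function.LeftInverse φ' φ) (hψ : Function.LeftInverse ψ' ψ)
    (hT : IsOOperator K b α β bv ρ φ ψ φ' ψ' T lam) :
    IsBiHomPostLie K (fun u v => lam • bv u v) (fun u v => ρ (T u) v) φ ψ ∧
      ∀ u v,
        T (subAdjacentBracket (fun u v => lam • bv u v) (fun u v => ρ (T u) v) φ ψ φ' ψ' u v) =
          b (T u) (T v) := by
  have hφψ : Function.Commute φ ψ := hmod.2.1.2.2.1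
  exact ⟨(hmod.const_smul lam).isBiHomPostLie hT.isLinearMap hT.map_φ hT.map_ψ
    (hT.bracket_map_ψ_φ hφψ hφ hψ), hT.map_subAdjacentBracket⟩

end OOperator

/-- an `O`-operator of weight `λ` on a regular `A`-module
`K`-algebra induces a BiHom-post-Lie algebra structure on `V`, and `T` is a
morphism from its sub-adjacent BiHom-Lie algebra to `(A, b, α, β)`. -/
theorem biHomPostLie_of_OOperator {K A V : Type*} [Field K] [CharZero K]
    [AddCommGroup A] [Module K A] [AddCommGroup V] [Module K V]
    (b : A → A → A) (α β α' β' : A → A) (bv : V → V → V) (ρ : A → V → V)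
    (φ ψ φ' ψ' : V → V) (T : V → A) (lam : K)
    (hb : IsBiHomLie K b α β)
    (hαα' : ∀ x, α (α' x) = x) (hα'α : ∀ x, α' (α x) = x)
    (hββ' : ∀ x, β (β' x) = x) (hβ'β : ∀ x, β' (β x) = x)
    (hmod : IsModuleKAlgebra K b α β bv ρ φ ψ)
    (hφφ' : ∀ v, φ (φ' v) = v) (hφ'φ : ∀ v, φ' (φ v) = v)
    (hψψ' : ∀ v, ψ (ψ' v) = v) (hψ'ψ : ∀ v, ψ' (ψ v) = v)
    (hT : IsLinearMap K T)
    (hTφ : ∀ v, T (φ v) = α (T v)) (hTψ : ∀ v, T (ψ v) = β (T v))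
    (hO : ∀ u v, b (T u) (T v) =
      T (ρ (T u) v - ρ (T (φ' (ψ v))) (φ (ψ' u)) + lam • bv u v)) :
    IsBiHomPostLie K (fun u v => lam • bv u v) (fun u v => ρ (T u) v) φ ψ ∧
      (∀ u v,
        T (lam • bv u v + ρ (T u) v - ρ (T (φ' (ψ v))) (φ (ψ' u))) =
          b (T u) (T v)) :=
  biHomPostLie_of_OOperator_general hmod hφ'φ hψ'ψ ⟨hT, hTφ, hTψ, hO⟩
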